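/- Let k ≥ 1, 0 ≤ s ≤ k, and n ≥ 1 be integers. Suppose there exists a Gallai coloring of the complete graph on n vertices with colors from {1,...,k} containing no monochromatic copy of K4^+ in any color i ∈ {1,...,s} and no monochromatic copy of K3 in any color i ∈ {s+1,...,k}. Then there exists a Gallai coloring of the complete graph on 5n vertices with colors from {1,...,k+2} containing no monochromatic copy of K4^+ in any color i ∈ {1,...,s} and no monochromatic copy of K3 in any color i ∈ {s+1,...,k} ∪ {k+1, k+2}. -/

import Mathlib

/-- A symmetric edge-coloring function on the complete graph on `Fin n`. -/
def IsSym {n : ℕ} {α : Type*} (c : Fin n → Fin n → α) : Prop :=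
  ∀ u v : Fin n, c u v = c v u

/-- A Gallai coloring: no triangle whose three edges get three distinct colors. -/
def NoRainbowTriangle {n : ℕ} {α : Type*} (c : Fin n → Fin n → α) : Prop :=
  ∀ u v w : Fin n, u ≠ v → u ≠ w → v ≠ w →
    c u v = c u w ∨ c u v = c v w ∨ c u w = c v w

/-- There is a monochromatic triangle in color `i`. -/
def HasMonoK3 {n : ℕ} {α : Type*} (c : Fin n → Fin n → α) (i : α) : Prop :=
  ∃ a b d : Fin n, a ≠ b ∧ a ≠ d ∧ b ≠ d ∧
    c a b = i ∧ c a d = i ∧ c b d = i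

/-- There is a monochromatic copy of `K₄⁺ = K₁ ∨ (K₃ + K₁)` in color `i`:
a vertex `x` joined to all of `a, b, d, e`, where `a b d` is a triangle
(equivalently `K₄` on `{x,a,b,d}` together with a pendant edge `x e`). -/
def HasMonoK4plus {n : ℕ} {α : Type*} (c : Fin n → Fin n → α) (i : α) : Prop :=
  ∃ x a b d e : Fin n,
    x ≠ a ∧ x ≠ b ∧ x ≠ d ∧ x ≠ e ∧ a ≠ b ∧ a ≠ d ∧ a ≠ e ∧ b ≠ d ∧ b ≠ e ∧ d ≠ e ∧
    c x a = i ∧ c x b = i ∧ c x d = i ∧ c x e = i ∧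
    c a b = i ∧ c a d = i ∧ c b d = i

/-!
Replace every vertex of a colored complete graph `d` by a copy of a colored complete graph `c`.
A triangle of the blow-up lies inside one copy, or meets two copies and then has two equally
colored edges, or meets three copies and is a triangle of `d`. For `d` take the partition of
`K₅` into two 5-cycles, in two new colors: a monochromatic connected subgraph in an old color
stays inside one copy of `c`, and one in a new color projects to `K₅`, which has no
monochromatic triangle.
-/

section Blowup

variable {m n : ℕ} {α : Type*} {d : Fin m → Fin m → α} {c : Fin n → Fin n → α}
  {u v : Fin (m * n)} {i : α}

/-- The blow-up (lexicographic product) of the coloring `d` by the coloring `c`: every vertex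
of `d` is replaced by a copy of `c`. The vertex `u` is vertex `u.modNat` of the copy of index
`u.divNat`. -/
def blowup (d : Fin m → Fin m → α) (c : Fin n → Fin n → α) : Fin (m * n) → Fin (m * n) → α :=
  fun u v ↦ if u.divNat = v.divNat then c u.modNat v.modNat else d u.divNat v.divNat

lemma blowup_of_divNat_eq (h : u.divNat = v.divNat) : blowup d c u v = c u.modNat v.modNat :=
  if_pos h

lemma blowup_of_divNat_ne (h : u.divNat ≠ v.divNat) : blowup d c u v = d u.divNat v.divNat :=
  if_neg h

lemma modNat_ne_of_divNat_eq (h : u.divNat = v.divNat) (huv : u ≠ v) : u.modNat ≠ v.modNat :=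
  fun h' ↦ huv (finProdFinEquiv.symm.injective (Prod.ext h h'))

lemma isSym_blowup (hd : IsSym d) (hc : IsSym c) : IsSym (blowup d c) := fun u v ↦ by
  simp only [blowup, eq_comm (a := u.divNat), hc u.modNat, hd u.divNat]

lemma blowup_mem {S : Set α} (hd : ∀ p q, p ≠ q → d p q ∈ S) (hc : ∀ x y, x ≠ y → c x y ∈ S)
    (huv : u ≠ v) : blowup d c u v ∈ S := by
  by_cases h : u.divNat = v.divNat
  · rw [blowup_of_divNat_eq h]
    exact hc _ _ (modNat_ne_of_divNat_eq h huv)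
  · rw [blowup_of_divNat_ne h]
    exact hd _ _ h

lemma noRainbowTriangle_blowup (hsym : IsSym d) (hd : NoRainbowTriangle d)
    (hc : NoRainbowTriangle c) : NoRainbowTriangle (blowup d c) := by
  intro u v w huv huw hvw
  by_cases h₁ : u.divNat = v.divNat
  · by_cases h₂ : v.divNat = w.divNat
    · have h₃ := h₁.trans h₂
      rw [blowup_of_divNat_eq h₁, blowup_of_divNat_eq h₂, blowup_of_divNat_eq h₃]
      exact hc _ _ _ (modNat_ne_of_divNat_eq h₁ huv) (modNat_ne_of_divNat_eq h₃ huw)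
        (modNat_ne_of_divNat_eq h₂ hvw)
    · right; right
      rw [blowup_of_divNat_ne h₂, blowup_of_divNat_ne (h₁ ▸ h₂), h₁]
  · by_cases h₂ : u.divNat = w.divNat
    · right; left
      rw [blowup_of_divNat_ne h₁, blowup_of_divNat_ne (h₂ ▸ Ne.symm h₁), hsym, h₂]
    · by_cases h₃ : v.divNat = w.divNat
      · left
        rw [blowup_of_divNat_ne h₁, blowup_of_divNat_ne h₂, h₃]
      · rw [blowup_of_divNat_ne h₁, blowup_of_divNat_ne h₂, blowup_of_divNat_ne h₃]
        exact hd _ _ _ h₁ h₂ h₃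

lemma divNat_eq_of_blowup_eq (hd : ∀ p q, p ≠ q → d p q ≠ i) (h : blowup d c u v = i) :
    u.divNat = v.divNat := by
  by_contra hne
  exact hd _ _ hne ((blowup_of_divNat_ne hne).symm.trans h)

lemma divNat_ne_of_blowup_eq (hc : ∀ x y, x ≠ y → c x y ≠ i) (huv : u ≠ v)
    (h : blowup d c u v = i) : u.divNat ≠ v.divNat :=
  fun heq ↦ hc _ _ (modNat_ne_of_divNat_eq heq huv) ((blowup_of_divNat_eq heq).symm.trans h)

lemma HasMonoK3.of_blowup_inner (hd : ∀ p q, p ≠ q → d p q ≠ i)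
    (h : HasMonoK3 (blowup d c) i) : HasMonoK3 c i := by
  obtain ⟨x, y, z, hxy, hxz, hyz, cxy, cxz, cyz⟩ := h
  have pxy := divNat_eq_of_blowup_eq hd cxy
  have pxz := divNat_eq_of_blowup_eq hd cxz
  have pyz := divNat_eq_of_blowup_eq hd cyz
  rw [blowup_of_divNat_eq pxy] at cxy
  rw [blowup_of_divNat_eq pxz] at cxz
  rw [blowup_of_divNat_eq pyz] at cyz
  exact ⟨x.modNat, y.modNat, z.modNat, modNat_ne_of_divNat_eq pxy hxy,
    modNat_ne_of_divNat_eq pxz hxz, modNat_ne_of_divNat_eq pyz hyz, cxy, cxz, cyz⟩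

lemma HasMonoK3.of_blowup_outer (hc : ∀ x y, x ≠ y → c x y ≠ i)
    (h : HasMonoK3 (blowup d c) i) : HasMonoK3 d i := by
  obtain ⟨x, y, z, hxy, hxz, hyz, cxy, cxz, cyz⟩ := h
  have pxy := divNat_ne_of_blowup_eq hc hxy cxy
  have pxz := divNat_ne_of_blowup_eq hc hxz cxz
  have pyz := divNat_ne_of_blowup_eq hc hyz cyz
  rw [blowup_of_divNat_ne pxy] at cxy
  rw [blowup_of_divNat_ne pxz] at cxz
  rw [blowup_of_divNat_ne pyz] at cyz
  exact ⟨x.divNat, y.divNat, z.divNat, pxy, pxz, pyz, cxy, cxz, cyz⟩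

lemma HasMonoK4plus.of_blowup_inner (hd : ∀ p q, p ≠ q → d p q ≠ i)
    (h : HasMonoK4plus (blowup d c) i) : HasMonoK4plus c i := by
  obtain ⟨x, a, b, y, e, hxa, hxb, hxy, hxe, hab, hay, hae, hby, hbe, hye,
    cxa, cxb, cxy, cxe, cab, cay, cby⟩ := h
  have pxa := divNat_eq_of_blowup_eq hd cxa
  have pxb := divNat_eq_of_blowup_eq hd cxb
  have pxy := divNat_eq_of_blowup_eq hd cxy
  have pxe := divNat_eq_of_blowup_eq hd cxe
  refine ⟨x.modNat, a.modNat, b.modNat, y.modNat, e.modNat, ?_⟩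
  grind [modNat_ne_of_divNat_eq, blowup_of_divNat_eq]

end Blowup

section TwoColoring

variable {n : ℕ} {α : Type*} (G : SimpleGraph (Fin n)) [DecidableRel G.Adj] (a b : α)

/-- The coloring of the complete graph on `Fin n` in which the edges of `G` have color `a` and
the edges of its complement have color `b`. -/
def twoColoring : Fin n → Fin n → α := fun u v ↦ if G.Adj u v then a else b

lemma isSym_twoColoring : IsSym (twoColoring G a b) := fun u v ↦ by
  simp only [twoColoring, G.adj_comm]

lemma twoColoring_eq_or_eq (u v : Fin n) :
    twoColoring G a b u v = a ∨ twoColoring G a b u v = b :=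
  ite_eq_or_eq ..

lemma noRainbowTriangle_twoColoring : NoRainbowTriangle (twoColoring G a b) := by
  intro u v w _ _ _
  grind [twoColoring_eq_or_eq]

variable {G a b}

lemma not_hasMonoK3_twoColoring (hab : a ≠ b) (hG : G.CliqueFree 3) (hG' : Gᶜ.CliqueFree 3)
    (i : α) : ¬ HasMonoK3 (twoColoring G a b) i := by
  rintro ⟨x, y, z, hxy, hxz, hyz, cxy, cxz, cyz⟩
  by_cases hi : i = a
  · have adj_of_color {u v} (h : twoColoring G a b u v = i) : G.Adj u v := by
      grind [twoColoring]
    exact hG {x, y, z} (SimpleGraph.is3Clique_triple_iff.2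
      ⟨adj_of_color cxy, adj_of_color cxz, adj_of_color cyz⟩)
  · have compl_adj_of_color {u v} (huv : u ≠ v) (h : twoColoring G a b u v = i) :
        Gᶜ.Adj u v := by
      grind [twoColoring, SimpleGraph.compl_adj]
    exact hG' {x, y, z} (SimpleGraph.is3Clique_triple_iff.2
      ⟨compl_adj_of_color hxy cxy, compl_adj_of_color hxz cxz, compl_adj_of_color hyz cyz⟩)

end TwoColoring

lemma cliqueFree_three_cycleGraph_five : (SimpleGraph.cycleGraph 5).CliqueFree 3 := by
  simp only [SimpleGraph.CliqueFree, SimpleGraph.isNClique_iff, SimpleGraph.isClique_iff]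
  decide

lemma cliqueFree_three_compl_cycleGraph_five : (SimpleGraph.cycleGraph 5)ᶜ.CliqueFree 3 := by
  simp only [SimpleGraph.CliqueFree, SimpleGraph.isNClique_iff, SimpleGraph.isClique_iff]
  decide

theorem blowup_K5 (k s n : ℕ) (hk : 1 ≤ k) (hs : s ≤ k) (hn : 1 ≤ n)
    (h : ∃ c : Fin n → Fin n → ℕ, IsSym c ∧
      (∀ u v : Fin n, u ≠ v → c u v ∈ Finset.Icc 1 k) ∧
      NoRainbowTriangle c ∧
      (∀ i ∈ Finset.Icc 1 s, ¬ HasMonoK4plus c i) ∧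
      (∀ i ∈ Finset.Icc (s + 1) k, ¬ HasMonoK3 c i)) :
    ∃ c : Fin (5 * n) → Fin (5 * n) → ℕ, IsSym c ∧
      (∀ u v : Fin (5 * n), u ≠ v → c u v ∈ Finset.Icc 1 (k + 2)) ∧
      NoRainbowTriangle c ∧
      (∀ i ∈ (Finset.Icc 1 s : Finset ℕ), ¬ HasMonoK4plus c i) ∧
      (∀ i ∈ (Finset.Icc (s + 1) k ∪ {k + 1, k + 2} : Finset ℕ), ¬ HasMonoK3 c i) := by
  obtain ⟨c, hsym, hcol, hgal, hK4, hK3⟩ := h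
  let d := twoColoring (SimpleGraph.cycleGraph 5) (k + 1) (k + 2)
  have hdsym : IsSym d := isSym_twoColoring _ _ _
  have hdgal : NoRainbowTriangle d := noRainbowTriangle_twoColoring _ _ _
  have hd (p q) : d p q = k + 1 ∨ d p q = k + 2 := twoColoring_eq_or_eq ..
  have hdK3 : ∀ i, ¬ HasMonoK3 d i := not_hasMonoK3_twoColoring (by omega)
    cliqueFree_three_cycleGraph_five cliqueFree_three_compl_cycleGraph_five
  have hd_mem (p q) (_ : p ≠ q) : d p q ∈ Set.Icc 1 (k + 2) := by grind
  have hc_mem (u v) (huv : u ≠ v) : c u v ∈ Set.Icc 1 (k + 2) := by grind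
  have hd_ne {i} (hi : i ≤ k) (p q) (_ : p ≠ q) : d p q ≠ i := by grind
  have hc_ne {i} (hi : k < i) (u v) (huv : u ≠ v) : c u v ≠ i := by grind
  refine ⟨blowup d c, isSym_blowup hdsym hsym, fun u v huv ↦ ?_,
    noRainbowTriangle_blowup hdsym hdgal hgal,
    fun i hi h ↦ ?_, fun i hi h ↦ ?_⟩
  · exact Finset.mem_Icc.2 (blowup_mem hd_mem hc_mem huv)
  · exact hK4 i hi (h.of_blowup_inner (hd_ne (by grind)))
  · rcases le_or_gt i k with hik | hik
    · exact hK3 i (by grind) (h.of_blowup_inner (hd_ne hik))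
    · exact hdK3 i (h.of_blowup_outer (hc_ne hik))
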